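/- Let F be a field, c₁, c₂ ∈ F, and let Q = ℍ[F, c₁, c₂] be the quaternion algebra over F with structure constants c₁, c₂; assume every nonzero element of Q is a unit (Q is a division algebra). Let A, B, C, D be 2 × 2 matrices over Q with C a unit of M₂(Q), and let M = fromBlocks A B C D be the corresponding 4 × 4 matrix over Q. For λ ∈ Q, write the 2 × 2 matrix C * (A − λ • 1) * C⁻¹ * (D − λ • 1) − C * B as !![e, f; g, h] (so e, f, g, h ∈ Q depend on λ). Then λ is a left eigenvalue of M (i.e., there exists a nonzero column vector v ∈ Q⁴ with M.mulVec v = λ • v, the scalar λ acting on the left) if and only if either (e = 0 and f * g = 0) or (e ≠ 0 and e * (star e) * h − g * (star e) * f = 0). -/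

import Mathlib

open Quaternion

/-!
Since `C` is invertible, the lower block row of `(M - λ) v = 0` expresses the first half of `v`
through the second half `y`, and substituting into the upper block row leaves the condition that
the Schur complement `(A - λ) C⁻¹ (D - λ) - B` kills `y`; multiplying it on the left by `C` does
not change its kernel.

For a `2 × 2` matrix `!![e, f; g, h]` with `e ≠ 0`, let `s` be nonzero with `e * s` central (for
quaternions, `s = star e`). The vector `(-s f, e s)` is killed by the first row, and the second row
sends it to `e s h - g s f`. Conversely, if `e x + f y = 0` and `g x + h y = 0`, then subtracting
`g s` times the first equation from `e s` times the second leaves `(e s h - g s f) y = 0`. If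
`e = 0` and `g ≠ 0`, the vector that kills the second row is found in the same way. Only the block
`C` has to be inverted, so the argument works in any domain with an involution whose norms
`q * star q` are central.
-/

section SchurComplement

open Matrix

variable {R : Type*} [Ring R] {m n p : Type*}

theorem fromBlocks_sub_smul_one [DecidableEq m] [DecidableEq n]
    (A : Matrix m m R) (B : Matrix m n R) (C : Matrix n m R) (D : Matrix n n R) (a : R) :
    fromBlocks A B C D - a • (1 : Matrix (m ⊕ n) (m ⊕ n) R) =
      fromBlocks (A - a • (1 : Matrix m m R)) B C (D - a • (1 : Matrix n n R)) := by
  rw [← fromBlocks_one, fromBlocks_smul, sub_eq_add_neg, fromBlocks_neg, fromBlocks_add]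
  simp only [smul_zero, neg_zero, add_zero, sub_eq_add_neg]

variable [Fintype n]

theorem mulVec_eq_smul_iff_sub_mulVec_eq_zero [DecidableEq n] (M : Matrix n n R) (a : R)
    (v : n → R) : M *ᵥ v = a • v ↔ (M - a • (1 : Matrix n n R)) *ᵥ v = 0 := by
  rw [sub_mulVec, smul_mulVec, one_mulVec, sub_eq_zero]

theorem unit_mulVec_eq_zero_iff [DecidableEq n] {C : Matrix n n R} (hC : IsUnit C) (x : n → R) :
    C *ᵥ x = 0 ↔ x = 0 := by
  conv_lhs => rw [← mulVec_zero C, (mulVec_injective_of_isUnit hC).eq_iff]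

theorem unit_mulVec_add_eq_zero_iff [Fintype p] [DecidableEq n] (C : (Matrix n n R)ˣ)
    (D : Matrix n p R) (x : n → R) (y : p → R) :
    C.val *ᵥ x + D *ᵥ y = 0 ↔ x = -((C⁻¹.val * D) *ᵥ y) := by
  have hfactor : C.val *ᵥ x + D *ᵥ y = C.val *ᵥ (x + (C⁻¹.val * D) *ᵥ y) := by
    rw [mulVec_add, mulVec_mulVec, ← Matrix.mul_assoc, C.mul_inv, Matrix.one_mul]
  rw [hfactor, unit_mulVec_eq_zero_iff C.isUnit, eq_neg_iff_add_eq_zero]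

theorem fromBlocks_mulVec_sumElim_eq_zero_iff [Fintype p] [DecidableEq n] (A : Matrix m n R)
    (B : Matrix m p R) (C : (Matrix n n R)ˣ) (D : Matrix n p R) (x : n → R) (y : p → R) :
    fromBlocks A B C.val D *ᵥ Sum.elim x y = 0 ↔
      x = -((C⁻¹.val * D) *ᵥ y) ∧ (A * C⁻¹.val * D - B) *ᵥ y = 0 := by
  rw [fromBlocks_mulVec, Sum.elim_comp_inl, Sum.elim_comp_inr, ← Sum.elim_zero_zero,
    Sum.elim_eq_iff, unit_mulVec_add_eq_zero_iff, and_comm]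
  refine and_congr_right fun hx ↦ ?_
  rw [hx, mulVec_neg, mulVec_mulVec, ← Matrix.mul_assoc, neg_add_eq_zero, sub_mulVec, sub_eq_zero]

theorem exists_fromBlocks_mulVec_eq_zero_iff [Fintype p] [DecidableEq n] (A : Matrix m n R)
    (B : Matrix m p R) (C : (Matrix n n R)ˣ) (D : Matrix n p R) :
    (∃ v ≠ 0, fromBlocks A B C.val D *ᵥ v = 0) ↔
      ∃ y ≠ 0, (A * C⁻¹.val * D - B) *ᵥ y = 0 := by
  constructor
  · rintro ⟨v, hv, hker⟩
    rw [← Sum.elim_comp_inl_inr v, fromBlocks_mulVec_sumElim_eq_zero_iff] at hker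
    refine ⟨v ∘ Sum.inr, fun hy ↦ hv ?_, hker.2⟩
    rw [← Sum.elim_comp_inl_inr v, hker.1, hy, mulVec_zero, neg_zero, Sum.elim_zero_zero]
  · rintro ⟨y, hy, hker⟩
    refine ⟨Sum.elim (-((C⁻¹.val * D) *ᵥ y)) y, fun hv ↦ hy ?_,
      (fromBlocks_mulVec_sumElim_eq_zero_iff A B C D _ y).2 ⟨rfl, hker⟩⟩
    exact (Sum.elim_eq_iff.1 (hv.trans Sum.elim_zero_zero.symm)).2

theorem exists_fromBlocks_mulVec_eq_smul_iff [DecidableEq n] (A B : Matrix n n R)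
    (C : (Matrix n n R)ˣ) (D : Matrix n n R) (a : R) :
    (∃ v ≠ 0, fromBlocks A B C.val D *ᵥ v = a • v) ↔
      ∃ y ≠ 0, (C.val * (A - a • (1 : Matrix n n R)) * C⁻¹.val * (D - a • (1 : Matrix n n R))
        - C.val * B) *ᵥ y = 0 := by
  simp only [mulVec_eq_smul_iff_sub_mulVec_eq_zero, fromBlocks_sub_smul_one,
    exists_fromBlocks_mulVec_eq_zero_iff, mul_assoc, ← mul_sub]
  simp only [← mulVec_mulVec, unit_mulVec_eq_zero_iff C.isUnit]

end SchurComplement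

section TwoByTwoKernel

open Matrix

variable {R : Type*} [Ring R]

theorem mulVec_fin_two_eq_zero_iff (e f g h : R) (v : Fin 2 → R) :
    !![e, f; g, h] *ᵥ v = 0 ↔ e * v 0 + f * v 1 = 0 ∧ g * v 0 + h * v 1 = 0 := by
  simp [funext_iff, Fin.forall_fin_two, dotProduct]

theorem mul_neg_mul_add_mul_mul_eq_zero {e s : R} (hes : ∀ x, Commute (e * s) x) (f : R) :
    e * -(s * f) + f * (e * s) = 0 := by
  rw [mul_neg, ← mul_assoc, (hes f).eq, neg_add_cancel]

theorem vec_neg_mul_mul_ne_zero [NoZeroDivisors R] {e s : R} (he : e ≠ 0) (hs : s ≠ 0) (f : R) :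
    ![-(s * f), e * s] ≠ 0 :=
  fun hv ↦ mul_ne_zero he hs (congrFun hv 1)

theorem commute_of_forall_commute_mul [NoZeroDivisors R] {e s : R} (he : e ≠ 0)
    (hes : ∀ x, Commute (e * s) x) : Commute e s :=
  mul_left_cancel₀ he <| by rw [← mul_assoc e s, (hes e).eq]

theorem sub_mul_eq_mul_row_sub_mul_row {e s : R} (hcomm : Commute e s)
    (hes : ∀ x, Commute (e * s) x) (f g h x y : R) :
    (e * s * h - g * s * f) * y = e * s * (g * x + h * y) - g * s * (e * x + f * y) := by
  have hx : e * s * (g * x) = g * s * (e * x) := by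
    rw [← mul_assoc, (hes g).eq, hcomm.eq]
    simp only [mul_assoc]
  rw [mul_add, hx]
  noncomm_ring

theorem exists_mulVec_fin_two_eq_zero_iff_of_ne_zero [NoZeroDivisors R] {e s : R} (he : e ≠ 0)
    (hs : s ≠ 0) (hes : ∀ x, Commute (e * s) x) (f g h : R) :
    (∃ v ≠ 0, !![e, f; g, h] *ᵥ v = 0) ↔ e * s * h - g * s * f = 0 := by
  simp only [mulVec_fin_two_eq_zero_iff]
  constructor
  · rintro ⟨v, hv, hrow₀, hrow₁⟩
    have hv₁ : v 1 ≠ 0 := by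
      intro hv₁
      have hv₀ : v 0 = 0 := by simpa [hv₁, he] using hrow₀
      exact hv (funext <| Fin.forall_fin_two.2 ⟨hv₀, hv₁⟩)
    refine (mul_eq_zero_iff_right hv₁).1 ?_
    rw [sub_mul_eq_mul_row_sub_mul_row (commute_of_forall_commute_mul he hes) hes f g h (v 0),
      hrow₀, hrow₁, mul_zero, mul_zero, sub_zero]
  · intro hdet
    refine ⟨![-(s * f), e * s], vec_neg_mul_mul_ne_zero he hs f,
      mul_neg_mul_add_mul_mul_eq_zero hes f, ?_⟩
    calc g * -(s * f) + h * (e * s) = e * s * h - g * s * f := by rw [(hes h).eq]; noncomm_ring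
      _ = 0 := hdet

theorem exists_mulVec_fin_two_eq_zero_iff_of_eq_zero [IsDomain R] {g s : R} (hs : g ≠ 0 → s ≠ 0)
    (hgs : ∀ x, Commute (g * s) x) (f h : R) :
    (∃ v ≠ 0, !![0, f; g, h] *ᵥ v = 0) ↔ f * g = 0 := by
  simp only [mulVec_fin_two_eq_zero_iff, zero_mul, zero_add]
  constructor
  · rintro ⟨v, hv, hrow₀, hrow₁⟩
    rcases mul_eq_zero.1 hrow₀ with hf | hv₁
    · rw [hf, zero_mul]
    · have hv₀ : v 0 ≠ 0 := fun hv₀ ↦ hv (funext <| Fin.forall_fin_two.2 ⟨hv₀, hv₁⟩)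
      have hg : g = 0 := by simpa [hv₁, hv₀] using hrow₁
      rw [hg, mul_zero]
  · intro hfg
    by_cases hg : g = 0
    · exact ⟨![1, 0], fun hv ↦ one_ne_zero (congrFun hv 0), by simp [hg]⟩
    · have hf : f = 0 := (mul_eq_zero_iff_right hg).1 hfg
      exact ⟨![-(s * h), g * s], vec_neg_mul_mul_ne_zero hg (hs hg) h, by rw [hf, zero_mul],
        mul_neg_mul_add_mul_mul_eq_zero hgs h⟩

theorem exists_mulVec_fin_two_eq_zero_iff [IsDomain R] [StarRing R]
    (hnorm : ∀ q x : R, Commute (q * star q) x) (e f g h : R) :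
    (∃ v ≠ 0, !![e, f; g, h] *ᵥ v = 0) ↔
      (e = 0 ∧ f * g = 0) ∨ (e ≠ 0 ∧ e * star e * h - g * star e * f = 0) := by
  by_cases he : e = 0
  · subst he
    rw [exists_mulVec_fin_two_eq_zero_iff_of_eq_zero star_ne_zero.2 (hnorm g)]
    simp
  · rw [exists_mulVec_fin_two_eq_zero_iff_of_ne_zero he (star_ne_zero.2 he) (hnorm e)]
    simp [he]

end TwoByTwoKernel

theorem isDomain_of_forall_isUnit {R : Type*} [Ring R] [Nontrivial R]
    (hR : ∀ q : R, q ≠ 0 → IsUnit q) : IsDomain R :=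
  letI := DivisionRing.ofIsUnitOrEqZero fun q : R ↦ or_iff_not_imp_right.2 (hR q)
  inferInstance

theorem commute_quaternion_mul_star {R : Type*} [CommRing R] {c₁ c₂ c₃ : R}
    (q x : ℍ[R,c₁,c₂,c₃]) : Commute (q * star q) x := by
  rw [QuaternionAlgebra.mul_star_eq_coe]
  exact QuaternionAlgebra.coe_commute _ x

theorem stmt_10_general {R : Type*} [Ring R] [IsDomain R] [StarRing R]
    (hnorm : ∀ q x : R, Commute (q * star q) x)
    (A B C D : Matrix (Fin 2) (Fin 2) R) (hC : IsUnit C) (lam e f g h : R)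
    (heq : C * (A - lam • (1 : Matrix (Fin 2) (Fin 2) R)) * (hC.unit⁻¹).val *
        (D - lam • (1 : Matrix (Fin 2) (Fin 2) R)) - C * B = !![e, f; g, h]) :
    (∃ v : Fin 2 ⊕ Fin 2 → R, v ≠ 0 ∧ (Matrix.fromBlocks A B C D).mulVec v = lam • v) ↔
      ((e = 0 ∧ f * g = 0) ∨ (e ≠ 0 ∧ e * star e * h - g * star e * f = 0)) := by
  have hschur := exists_fromBlocks_mulVec_eq_smul_iff A B hC.unit D lam
  rw [hC.unit_spec, heq] at hschur
  exact hschur.trans (exists_mulVec_fin_two_eq_zero_iff hnorm e f g h)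

theorem stmt_10 (F : Type*) [Field F] (c₁ c₂ : F)
    (hQ : ∀ q : ℍ[F, c₁, c₂], q ≠ 0 → IsUnit q)
    (A B C D : Matrix (Fin 2) (Fin 2) ℍ[F, c₁, c₂]) (hC : IsUnit C)
    (lam : ℍ[F, c₁, c₂]) (e f g h : ℍ[F, c₁, c₂])
    (heq : C * (A - lam • (1 : Matrix (Fin 2) (Fin 2) ℍ[F, c₁, c₂])) * (hC.unit⁻¹).val *
        (D - lam • (1 : Matrix (Fin 2) (Fin 2) ℍ[F, c₁, c₂])) - C * B = !![e, f; g, h]) :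
    (∃ v : Fin 2 ⊕ Fin 2 → ℍ[F, c₁, c₂], v ≠ 0 ∧
        (Matrix.fromBlocks A B C D).mulVec v = lam • v) ↔
      ((e = 0 ∧ f * g = 0) ∨ (e ≠ 0 ∧ e * star e * h - g * star e * f = 0)) := by
  have := isDomain_of_forall_isUnit hQ
  exact stmt_10_general commute_quaternion_mul_star A B C D hC lam e f g h heq
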